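/- Suppose (V, ⊕, ⊗) satisfies criteria (C1), (C2) and (C3). Then for every finite edge set K, all key sets K₁, K₂, all arrays E_out : K × K₁ → V and E_in : K × K₂ → V, and all y ∈ K₂, x ∈ K₁, the entry (E_inᵀ E_out)(y,x) = ⊕_{k∈K} E_in(k,y) ⊗ E_out(k,x) is nonzero if and only if there exists k ∈ K with E_in(k,y) ≠ 0 and E_out(k,x) ≠ 0. (In graph terms: if E_out and E_in are the source and target incidence arrays of a weighted directed graph G, then E_inᵀ E_out is an adjacency array of the reversed graph R(G), since E_in and E_out serve as source and target incidence arrays of R(G).) -/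

import Mathlib

theorem subsingleton_addUnits_of_add_ne_zero {M : Type*} [AddMonoid M]
    (hadd : ∀ v w : M, v ≠ 0 → w ≠ 0 → v + w ≠ 0) : Subsingleton (AddUnits M) := by
  refine Subsingleton.addUnits_of_isAddUnit fun v hv => by_contra fun hv_ne => ?_
  obtain ⟨w, hvw⟩ := hv.exists_neg
  have hw : w = 0 := by_contra fun hw_ne => hadd v w hv_ne hw_ne hvw
  exact hv_ne (by rwa [hw, add_zero] at hvw)

theorem op_ne_zero_iff {A B C : Type*} [Zero A] [Zero B] [Zero C] {op : A → B → C}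
    (hop : ∀ a b, a ≠ 0 → b ≠ 0 → op a b ≠ 0)
    (op_zero : ∀ a, op a 0 = 0) (zero_op : ∀ b, op 0 b = 0) {a : A} {b : B} :
    op a b ≠ 0 ↔ a ≠ 0 ∧ b ≠ 0 where
  mp h := ⟨fun ha => h (ha ▸ zero_op b), fun hb => h (hb ▸ op_zero a)⟩
  mpr h := hop a b h.1 h.2

theorem stmt7_general {A B V : Type*} [Zero A] [Zero B] [AddCommMonoid V] {mul : A → B → V}
    (C1 : ∀ v w : V, v ≠ 0 → w ≠ 0 → v + w ≠ 0)
    (C2 : ∀ a b, a ≠ 0 → b ≠ 0 → mul a b ≠ 0)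
    (mul_zero : ∀ a, mul a 0 = 0) (zero_mul : ∀ b, mul 0 b = 0)
    {K K₁ K₂ : Type*} (s : Finset K) (Eout : K × K₁ → B) (Ein : K × K₂ → A) (y : K₂) (x : K₁) :
    ∑ k ∈ s, mul (Ein (k, y)) (Eout (k, x)) ≠ 0 ↔
      ∃ k ∈ s, Ein (k, y) ≠ 0 ∧ Eout (k, x) ≠ 0 := by
  have : Subsingleton (AddUnits V) := subsingleton_addUnits_of_add_ne_zero C1
  calc ∑ k ∈ s, mul (Ein (k, y)) (Eout (k, x)) ≠ 0
    _ ↔ ∃ k ∈ s, mul (Ein (k, y)) (Eout (k, x)) ≠ 0 := by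
      simp only [ne_eq, Finset.sum_eq_zero_iff, not_forall, exists_prop]
    _ ↔ ∃ k ∈ s, Ein (k, y) ≠ 0 ∧ Eout (k, x) ≠ 0 := by
      simp only [op_ne_zero_iff C2 mul_zero zero_mul]

/-- If (V, ⊕, ⊗) satisfies (C1), (C2) and (C3), then for every
finite edge set `K`, key sets `K₁ K₂`, arrays `Eout : K × K₁ → V`,
`Ein : K × K₂ → V` and all `y ∈ K₂`, `x ∈ K₁`, the entry
`(Einᵀ Eout)(y,x) = ⊕_{k∈K} Ein(k,y) ⊗ Eout(k,x)` is nonzero iff some `k`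
has `Ein(k,y) ≠ 0` and `Eout(k,x) ≠ 0` (i.e. `Einᵀ Eout` is an adjacency
array of the reversed graph). -/
theorem stmt7 (V : Type*) [AddCommMonoid V]
    (mul : V → V → V) (one : V)
    (hone : ∀ v : V, mul v one = v ∧ mul one v = v)
    (C1 : ∀ v w : V, v ≠ 0 → w ≠ 0 → v + w ≠ 0)
    (C2 : ∀ a b : V, a ≠ 0 → b ≠ 0 → mul a b ≠ 0)
    (C3 : ∀ v : V, mul v 0 = 0 ∧ mul 0 v = 0) :
    ∀ (K : Type) [Fintype K] (K₁ K₂ : Type)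
      (Eout : K × K₁ → V) (Ein : K × K₂ → V) (y : K₂) (x : K₁),
      (∑ k : K, mul (Ein (k, y)) (Eout (k, x))) ≠ 0 ↔
        ∃ k : K, Ein (k, y) ≠ 0 ∧ Eout (k, x) ≠ 0 := by
  intro K _ K₁ K₂ Eout Ein y x
  simpa only [Finset.mem_univ, true_and] using
    stmt7_general C1 C2 (fun v => (C3 v).1) (fun v => (C3 v).2) Finset.univ Eout Ein y x
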